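/- The convex hull of the unitary group U(d) inside M_d(ℂ) is exactly the set of d×d complex matrices U with operator norm ‖U‖_∞ ≤ 1. -/

import Mathlib

open Matrix

/-!
A singular value decomposition `A = U * diagonal σ * V` reduces the theorem to diagonal matrices:
multiplication by unitaries preserves both the operator norm and the convex hull of the unitary
group. A diagonal contraction is a point of the polydisc, which is the convex hull of the product
of unit spheres, and diagonal matrices with entries of modulus one are unitary. Singular vectors
come from an orthonormal eigenbasis of `T† ∘ T`: its image under `T` is an orthogonal family, which
normalizes and extends to an orthonormal basis.
-/

open Module
open scoped InnerProductSpace NNReal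

section SingularVectors

variable {𝕜 E F ι : Type*} [RCLike 𝕜] [Fintype ι]
  [NormedAddCommGroup E] [InnerProductSpace 𝕜 E] [FiniteDimensional 𝕜 E]
  [NormedAddCommGroup F] [InnerProductSpace 𝕜 F] [FiniteDimensional 𝕜 F]

theorem exists_orthonormalBasis_eq_norm_smul (hι : finrank 𝕜 E = Fintype.card ι) {v : ι → E}
    (hv : Pairwise fun i j ↦ ⟪v i, v j⟫_𝕜 = 0) :
    ∃ c : OrthonormalBasis ι 𝕜 E, ∀ i, v i = (‖v i‖ : 𝕜) • c i := by
  let w : ι → E := fun i ↦ (‖v i‖⁻¹ : 𝕜) • v i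
  have hw : Orthonormal 𝕜 ({i | v i ≠ 0}.domRestrict w) :=
    ⟨fun i ↦ norm_smul_inv_norm i.2, fun i j hij ↦ by
      simp [w, inner_smul_left, inner_smul_right, hv (Subtype.coe_ne_coe.mpr hij)]⟩
  obtain ⟨c, hc⟩ := hw.exists_orthonormalBasis_extension_of_card_eq hι
  refine ⟨c, fun i ↦ ?_⟩
  by_cases hi : v i = 0
  · simp [hi]
  · have hnorm : (‖v i‖ : 𝕜) ≠ 0 := by simpa using hi
    rw [hc i hi, smul_inv_smul₀ hnorm]

theorem exists_orthonormalBasis_pairwise_inner_map_eq_zero (hι : finrank 𝕜 E = Fintype.card ι)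
    (T : E →ₗ[𝕜] F) :
    ∃ b : OrthonormalBasis ι 𝕜 E, Pairwise fun i j ↦ ⟪T (b i), T (b j)⟫_𝕜 = 0 := by
  have hT := T.isSymmetric_adjoint_comp_self
  let e := (Fintype.equivFin ι).symm
  refine ⟨(hT.eigenvectorBasis hι).reindex e, fun i j hij ↦ ?_⟩
  have hij_symm : e.symm i ≠ e.symm j := e.symm.injective.ne hij
  calc
    _ = ⟪hT.eigenvectorBasis hι (e.symm i),
          (T.adjoint ∘ₗ T) (hT.eigenvectorBasis hι (e.symm j))⟫_𝕜 := by
      simp only [OrthonormalBasis.reindex_apply, LinearMap.comp_apply,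
        LinearMap.adjoint_inner_right]
    _ = 0 := by
      rw [hT.apply_eigenvectorBasis, inner_smul_right,
        (hT.eigenvectorBasis hι).inner_eq_zero hij_symm, mul_zero]

theorem exists_orthonormalBasis_map_eq_norm_smul (hE : finrank 𝕜 E = Fintype.card ι)
    (hF : finrank 𝕜 F = Fintype.card ι) (T : E →ₗ[𝕜] F) :
    ∃ (b : OrthonormalBasis ι 𝕜 E) (c : OrthonormalBasis ι 𝕜 F),
      ∀ i, T (b i) = (‖T (b i)‖ : 𝕜) • c i := by
  obtain ⟨b, hb⟩ := exists_orthonormalBasis_pairwise_inner_map_eq_zero hE T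
  obtain ⟨c, hc⟩ := exists_orthonormalBasis_eq_norm_smul hF hb
  exact ⟨b, c, hc⟩

end SingularVectors

theorem mul_mul_mem_convexHull_unitary {K R : Type*} [CommSemiring K] [PartialOrder K] [Semiring R]
    [StarMul R] [Algebra K R] {u v x : R} (hu : u ∈ unitary R) (hv : v ∈ unitary R)
    (hx : x ∈ convexHull K (unitary R : Set R)) :
    u * x * v ∈ convexHull K (unitary R : Set R) :=
  convexHull_min (t := LinearMap.mulLeftRight K (u, v) ⁻¹' convexHull K (unitary R : Set R))
    (fun _ hw ↦ subset_convexHull K _ (mul_mem (mul_mem hu hw) hv))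
    ((convex_convexHull K _).linear_preimage _) hx

theorem norm_le_one_of_mem_unitary {R : Type*} [NormedRing R] [StarRing R] [CStarRing R] {u : R}
    (hu : u ∈ unitary R) : ‖u‖ ≤ 1 := by
  cases subsingleton_or_nontrivial R
  · simp [Subsingleton.elim u 0]
  · exact (CStarRing.norm_of_mem_unitary hu).le

section UnitaryGroup

open scoped Matrix.Norms.L2Operator

variable {𝕜 n : Type*} [RCLike 𝕜] [Fintype n] [DecidableEq n]

theorem exists_eq_unitary_mul_diagonal_mul_unitary (A : Matrix n n 𝕜) :
    ∃ U ∈ unitaryGroup n 𝕜, ∃ σ : n → ℝ≥0, ∃ V ∈ unitaryGroup n 𝕜,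
      A = U * diagonal (fun i ↦ ((σ i : ℝ) : 𝕜)) * V := by
  let e := EuclideanSpace.basisFun n 𝕜
  have hn : finrank 𝕜 (EuclideanSpace 𝕜 n) = Fintype.card n := finrank_euclideanSpace
  obtain ⟨b, c, h⟩ := exists_orthonormalBasis_map_eq_norm_smul hn hn (toEuclideanLin A)
  let U := e.toBasis.toMatrix c
  let V := e.toBasis.toMatrix b
  let σ : n → ℝ≥0 := fun j ↦ ‖toEuclideanLin A (b j)‖₊
  have hU : U ∈ unitaryGroup n 𝕜 := e.toMatrix_orthonormalBasis_mem_unitary c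
  have hV : V ∈ unitaryGroup n 𝕜 := e.toMatrix_orthonormalBasis_mem_unitary b
  have hAV : A * V = U * diagonal (fun j ↦ ((σ j : ℝ) : 𝕜)) := by
    ext i j
    calc
      (A * V) i j = toEuclideanLin A (b j) i := rfl
      _ = (σ j : ℝ) * c j i := congrArg (· i) (h j)
      _ = (U * diagonal fun j ↦ ((σ j : ℝ) : 𝕜)) i j := by rw [mul_diagonal, mul_comm]; rfl
  refine ⟨U, hU, σ, star V, Unitary.star_mem hV, ?_⟩
  rw [← hAV, Matrix.mul_assoc, Unitary.mul_star_self_of_mem hV, Matrix.mul_one]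

theorem diagonal_mem_unitaryGroup {s : n → 𝕜} (hs : ∀ i, ‖s i‖ = 1) :
    diagonal s ∈ unitaryGroup n 𝕜 := by
  rw [mem_unitaryGroup_iff, star_eq_conjTranspose, diagonal_conjTranspose, diagonal_mul_diagonal,
    ← diagonal_one]
  congr! with i
  simp [RCLike.mul_conj, hs]

theorem diagonal_mem_convexHull_unitaryGroup {s : n → 𝕜} (hs : ‖s‖ ≤ 1) :
    diagonal s ∈ convexHull ℝ (unitaryGroup n 𝕜 : Set (Matrix n n 𝕜)) := by
  have hpi : s ∈ convexHull ℝ (Set.univ.pi fun _ : n ↦ Metric.sphere (0 : 𝕜) 1) := by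
    refine mem_convexHull_pi fun i _ ↦ ?_
    rw [convexHull_sphere_eq_closedBall 0 zero_le_one, mem_closedBall_zero_iff]
    exact (norm_le_pi_norm s i).trans hs
  refine convexHull_min
    (t := diagonalLinearMap n ℝ 𝕜 ⁻¹' convexHull ℝ (unitaryGroup n 𝕜 : Set (Matrix n n 𝕜)))
    (fun w hw ↦ subset_convexHull ℝ _ (diagonal_mem_unitaryGroup fun i ↦ ?_))
    ((convex_convexHull ℝ _).linear_preimage _) hpi
  exact mem_sphere_zero_iff_norm.mp (hw i (Set.mem_univ i))

theorem convexHull_unitaryGroup_eq_closedBall :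
    convexHull ℝ (unitaryGroup n 𝕜 : Set (Matrix n n 𝕜)) = Metric.closedBall 0 1 := by
  have hball : Convex ℝ (Metric.closedBall (0 : Matrix n n 𝕜) 1) := by
    rw [← closedBall_normSeminorm 𝕜]
    exact (normSeminorm 𝕜 (Matrix n n 𝕜)).convex_closedBall 0 1
  apply Set.Subset.antisymm
  · refine convexHull_min (fun U hU ↦ ?_) hball
    exact mem_closedBall_zero_iff.mpr (norm_le_one_of_mem_unitary hU)
  · intro A hA
    obtain ⟨U, hU, σ, V, hV, rfl⟩ := exists_eq_unitary_mul_diagonal_mul_unitary A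
    rw [mem_closedBall_zero_iff, CStarRing.norm_mul_mem_unitary _ hV,
      CStarRing.norm_mem_unitary_mul _ hU, l2_opNorm_diagonal] at hA
    exact mul_mul_mem_convexHull_unitary hU hV (diagonal_mem_convexHull_unitaryGroup hA)

theorem l2_opNorm_le_one_iff {m : Type*} [Fintype m] {A : Matrix m n 𝕜} :
    ‖A‖ ≤ 1 ↔ ∀ v : n → 𝕜, ∑ i, ‖(A *ᵥ v) i‖ ^ 2 ≤ ∑ i, ‖v i‖ ^ 2 := by
  rw [l2_opNorm_def, ContinuousLinearMap.opNorm_le_iff zero_le_one,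
    (WithLp.equiv 2 (n → 𝕜)).symm.surjective.forall]
  refine forall_congr' fun v ↦ ?_
  rw [one_mul, ← sq_le_sq₀ (norm_nonneg _) (norm_nonneg _), EuclideanSpace.norm_sq_eq,
    EuclideanSpace.norm_sq_eq]
  rfl

theorem convexHull_unitaryGroup_eq_contractions_general :
    convexHull ℝ (unitaryGroup n 𝕜 : Set (Matrix n n 𝕜))
      = {A : Matrix n n 𝕜 | ∀ v : n → 𝕜, ∑ i, ‖(A *ᵥ v) i‖ ^ 2 ≤ ∑ i, ‖v i‖ ^ 2} := by
  ext A
  rw [convexHull_unitaryGroup_eq_closedBall, mem_closedBall_zero_iff, l2_opNorm_le_one_iff,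
    Set.mem_ofPred_eq]

end UnitaryGroup

/-- the convex hull of the unitary group `U(d)` inside `M_d(ℂ)` is exactly
the set of `d×d` complex matrices of operator norm at most 1 (ℓ²-contractions). -/
theorem convexHull_unitaryGroup_eq_contractions (d : ℕ) :
    convexHull ℝ ((Matrix.unitaryGroup (Fin d) ℂ : Set (Matrix (Fin d) (Fin d) ℂ)))
      = {A : Matrix (Fin d) (Fin d) ℂ |
          ∀ v : Fin d → ℂ, ∑ i, ‖A.mulVec v i‖ ^ 2 ≤ ∑ i, ‖v i‖ ^ 2} :=
  convexHull_unitaryGroup_eq_contractions_general
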